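/- Let q be a prime power, F_q the finite field with q elements, and let s ≥ 1 and d ≥ 1 be integers with s ≤ d and d ≤ √q. Let P be the set of polynomials f ∈ F_q[X_1, …, X_s, Y_1, …, Y_s] whose total degree in the variables X_1, …, X_s is at most d and whose total degree in the variables Y_1, …, Y_s is at most d. For f ∈ P and U ⊆ F_q^s, let N_f(U) = {v ∈ F_q^s : f(u, v) = 0 for all u ∈ U}. Let M = Σ_{r=1}^{d} M_r, where M_r is the number of surjective functions from a d-element set onto an r-element set. Then for every set U ⊆ F_q^s of size s and every real λ > 0, the number of f ∈ P with |N_f(U)| ≥ λ is at most M · |P| / λ^d. -/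

import Mathlib

/-!
Markov's inequality reduces the claim to the `d`-th moment bound `∑_f |N_f(U)| ^ d ≤ M |P|`
(`moment_bound`). The `d`-th power counts `d`-tuples of points of `N_f(U)`, so after exchanging
sums one counts, for each tuple `g`, the `f ∈ P` vanishing on `U × T`, where `T` is the set of
entries of `g`. As `|U|, |T| ≤ d`, products of Lagrange polynomials in `X` and in `Y` show that
`P` interpolates arbitrary values on `U × T`, so with `r = |T|` at most `|P| q ^ (-s r)` such `f`
exist (`card_vanishing_mul_le`). There are at most `M_r (q ^ s) ^ r` tuples with exactly `r`
distinct entries (`card_tuples_le`), and the powers of `q` cancel.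
-/

open MvPolynomial

/-- The set of polynomials in the `2s` variables `X₁,…,X_s,Y₁,…,Y_s` whose total
degree in the `X`-variables is at most `d` and whose total degree in the
`Y`-variables is at most `d`. -/
def PolySet (F : Type*) [CommSemiring F] (s d : ℕ) :
    Set (MvPolynomial (Fin s ⊕ Fin s) F) :=
  {f | ∀ m ∈ f.support,
    (∑ i : Fin s, m (Sum.inl i)) ≤ d ∧ (∑ i : Fin s, m (Sum.inr i)) ≤ d}

/-- The common neighborhood of `U` in the bipartite graph associated to `f`:
the set of `v` with `f(u,v) = 0` for all `u ∈ U`, as a `Finset`. -/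
noncomputable def commonNbhd {F : Type*} [Field F] [Fintype F] {s : ℕ}
    (f : MvPolynomial (Fin s ⊕ Fin s) F) (U : Finset (Fin s → F)) :
    Finset (Fin s → F) :=
  open Classical in
  Finset.univ.filter (fun v => ∀ u ∈ U, eval (Sum.elim u v) f = 0)

/-- `M_r`: the number of surjections from a `d`-element set onto an
`r`-element set. -/
noncomputable def numSurj (d r : ℕ) : ℕ :=
  (Finset.univ.filter (fun g : Fin d → Fin r => Function.Surjective g)).card

theorem PolySet.add_mem {F : Type*} [CommSemiring F] {s d : ℕ}
    {f g : MvPolynomial (Fin s ⊕ Fin s) F} (hf : f ∈ PolySet F s d) (hg : g ∈ PolySet F s d) :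
    f + g ∈ PolySet F s d := by
  classical
  intro m hm
  rcases Finset.mem_union.1 (support_add hm) with h | h
  · exact hf m h
  · exact hg m h

theorem PolySet.C_mul_mem {F : Type*} [CommSemiring F] {s d : ℕ} (c : F)
    {f : MvPolynomial (Fin s ⊕ Fin s) F} (hf : f ∈ PolySet F s d) :
    C c * f ∈ PolySet F s d := by
  intro m hm
  apply hf m
  rw [mem_support_iff] at hm ⊢
  intro h
  rw [coeff_C_mul, h, mul_zero] at hm
  exact hm rfl

theorem PolySet.sum_mem {F ι : Type*} [CommSemiring F] {s d : ℕ} (A : Finset ι)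
    {f : ι → MvPolynomial (Fin s ⊕ Fin s) F} (hf : ∀ i ∈ A, f i ∈ PolySet F s d) :
    ∑ i ∈ A, f i ∈ PolySet F s d :=
  Finset.sum_induction f (· ∈ PolySet F s d) (fun _ _ => PolySet.add_mem)
    (by intro m hm; simp at hm) hf

theorem PolySet.rename_mul_rename_mem {F : Type*} [CommSemiring F] {s d : ℕ}
    {p r : MvPolynomial (Fin s) F} (hp : p.totalDegree ≤ d) (hr : r.totalDegree ≤ d) :
    rename Sum.inl p * rename Sum.inr r ∈ PolySet F s d := by
  classical
  intro m hm
  obtain ⟨a, ha, b, hb, rfl⟩ := Finset.mem_add.1 (support_mul _ _ hm)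
  rw [support_rename_of_injective Sum.inl_injective, Finset.mem_image] at ha
  rw [support_rename_of_injective Sum.inr_injective, Finset.mem_image] at hb
  obtain ⟨a, ha, rfl⟩ := ha
  obtain ⟨b, hb, rfl⟩ := hb
  have h1 := (le_totalDegree ha).trans hp
  have h2 := (le_totalDegree hb).trans hr
  rw [Finsupp.sum_fintype _ _ (fun _ => rfl)] at h1 h2
  constructor
  · simpa [Finsupp.mapDomain_apply Sum.inl_injective, Finsupp.mapDomain_of_notMem_range] using h1
  · simpa [Finsupp.mapDomain_apply Sum.inr_injective, Finsupp.mapDomain_of_notMem_range] using h2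

theorem PolySet.finite (F : Type*) [Field F] [Finite F] (s d : ℕ) :
    (PolySet F s d).Finite := by
  set S : Set ((Fin s ⊕ Fin s) →₀ ℕ) :=
    {m | (∑ i : Fin s, m (Sum.inl i)) ≤ d ∧ (∑ i : Fin s, m (Sum.inr i)) ≤ d} with hS
  have hfin : S.Finite := by
    apply (Set.finite_Iic (Finsupp.equivFunOnFinite.symm fun _ => d)).subset
    rintro m ⟨h1, h2⟩ (i | i)
    · exact (Finset.single_le_sum (f := fun i => m (Sum.inl i))
        (fun _ _ => Nat.zero_le _) (Finset.mem_univ i)).trans h1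
    · exact (Finset.single_le_sum (f := fun i => m (Sum.inr i))
        (fun _ _ => Nat.zero_le _) (Finset.mem_univ i)).trans h2
  have := hfin.to_subtype
  have : Module.Finite F (restrictSupport F S) := Module.Finite.of_basis (basisRestrictSupport F S)
  have : Finite (restrictSupport F S) := Module.finite_of_finite F
  refine (Set.toFinite (restrictSupport F S : Set (MvPolynomial (Fin s ⊕ Fin s) F))).subset ?_
  intro f hf
  exact (mem_restrictSupport_iff F).2 fun m hm => hf m hm

/-- The Lagrange polynomial of a point `t` of a finite set `T`, with total degree at most `|T|`. It
is the product over `t' ∈ T \ {t}` of an affine function of one coordinate that separates `t`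
from `t'`, so no assumption on the size of the field is needed. -/
theorem exists_lagrange {F : Type*} [Field F] {s : ℕ} (T : Finset (Fin s → F)) (t : Fin s → F) :
    ∃ p : MvPolynomial (Fin s) F, p.totalDegree ≤ T.card ∧ eval t p = 1 ∧
      ∀ t' ∈ T, t' ≠ t → eval t' p = 0 := by
  classical
  have h : ∀ t' : Fin s → F, ∃ l : MvPolynomial (Fin s) F, l.totalDegree ≤ 1 ∧ eval t l = 1 ∧
      (t' ≠ t → eval t' l = 0) := by
    intro t'
    by_cases ht : t' = t
    · exact ⟨1, by simp, by simp, fun h => (h ht).elim⟩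
    · obtain ⟨i, hi⟩ := Function.ne_iff.1 ht
      refine ⟨C (t i - t' i)⁻¹ * (X i - C (t' i)), ?_, ?_, ?_⟩
      · refine (totalDegree_mul _ _).trans ?_
        have := totalDegree_sub_C_le (X i : MvPolynomial (Fin s) F) (t' i)
        rw [totalDegree_X] at this
        rw [totalDegree_C]
        omega
      · simp [inv_mul_cancel₀ (sub_ne_zero.2 (Ne.symm hi))]
      · simp
  choose l hl1 hl2 hl3 using h
  refine ⟨∏ t' ∈ T, l t', ?_, ?_, ?_⟩
  · refine (totalDegree_finsetProd _ _).trans ?_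
    simpa using Finset.sum_le_sum fun t' (_ : t' ∈ T) => hl1 t'
  · simp [map_prod, hl2]
  · intro t' ht' hne
    rw [map_prod]
    exact Finset.prod_eq_zero ht' (hl3 t' hne)

theorem PolySet.exists_interpolant {F : Type*} [Field F] {s d : ℕ} {U T : Finset (Fin s → F)}
    (hU : U.card ≤ d) (hT : T.card ≤ d) (c : U × T → F) :
    ∃ h ∈ PolySet F s d, ∀ x : U × T, eval (Sum.elim x.1.1 x.2.1) h = c x := by
  classical
  choose p hp1 hp2 hp3 using exists_lagrange U
  choose r hr1 hr2 hr3 using exists_lagrange T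
  refine ⟨∑ x : U × T, C (c x) * (rename Sum.inl (p x.1) * rename Sum.inr (r x.2)),
    PolySet.sum_mem _ fun x _ => PolySet.C_mul_mem _
      (PolySet.rename_mul_rename_mem ((hp1 _).trans hU) ((hr1 _).trans hT)), ?_⟩
  intro x
  rw [map_sum, Finset.sum_eq_single x]
  · simp [eval_rename, hp2, hr2]
  · intro y _ hy
    by_cases h1 : x.1 = y.1
    · have h2 : x.2.1 ≠ y.2.1 := fun h2 => hy (Prod.ext h1.symm (Subtype.ext h2.symm))
      simp [eval_rename, hr3 y.2.1 x.2.1 x.2.2 h2]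
    · have h2 : x.1.1 ≠ y.1.1 := fun h2 => h1 (Subtype.ext h2)
      simp [eval_rename, hp3 y.1.1 x.1.1 x.1.2 h2]
  · simp

/-- At most a fraction `q ^ (-|U||T|)` of the polynomials vanish on `U × T`: translating the
vanishing ones by interpolants of the `q ^ (|U||T|)` possible value tables gives distinct
polynomials. -/
theorem card_vanishing_mul_le {F : Type*} [Field F] [Fintype F] {s d : ℕ}
    {U T : Finset (Fin s → F)} (hU : U.card ≤ d) (hT : T.card ≤ d)
    (Z : Finset (MvPolynomial (Fin s ⊕ Fin s) F)) (hZ : ∀ f ∈ Z, f ∈ PolySet F s d ∧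
      ∀ v ∈ T, ∀ u ∈ U, eval (Sum.elim u v) f = 0) :
    Z.card * Fintype.card F ^ (U.card * T.card) ≤ (PolySet F s d).ncard := by
  classical
  choose h hh1 hh2 using PolySet.exists_interpolant (F := F) (s := s) hU hT
  have hcard : (Z ×ˢ (Finset.univ : Finset (U × T → F))).card
      = Z.card * Fintype.card F ^ (U.card * T.card) := by
    simp [Finset.card_product]
  rw [← hcard, Set.ncard_eq_toFinset_card _ (PolySet.finite F s d)]
  refine Finset.card_le_card_of_injOn (fun x => x.1 + h x.2) ?_ ?_
  · intro x hx
    have hx := (Finset.mem_product.1 (Finset.mem_coe.1 hx)).1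
    simpa using PolySet.add_mem (hZ _ hx).1 (hh1 x.2)
  · rintro ⟨f, c⟩ hx ⟨g, e⟩ hy hxy
    have hx := (Finset.mem_product.1 (Finset.mem_coe.1 hx)).1
    have hy := (Finset.mem_product.1 (Finset.mem_coe.1 hy)).1
    simp only at hxy hx hy
    have hce : c = e := by
      funext x
      have := congrArg (eval (Sum.elim x.1.1 x.2.1)) hxy
      simpa [hh2, (hZ f hx).2 _ x.2.2 _ x.1.2, (hZ g hy).2 _ x.2.2 _ x.1.2] using this
    subst hce
    simpa using hxy

/-- A tuple with exactly `r` distinct entries factors as a surjection onto `Fin r` followed by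
a map out of `Fin r`. -/
theorem card_tuples_le {α : Type*} [Fintype α] [DecidableEq α] (d r : ℕ) :
    (Finset.univ.filter fun g : Fin d → α => (Finset.univ.image g).card = r).card
      ≤ numSurj d r * Fintype.card α ^ r := by
  classical
  have hcard : ((Finset.univ.filter (fun g : Fin d → Fin r => Function.Surjective g)) ×ˢ
      (Finset.univ : Finset (Fin r → α))).card = numSurj d r * Fintype.card α ^ r := by
    rw [Finset.card_product]
    simp only [numSurj, Finset.card_univ, Fintype.card_fun, Fintype.card_fin]
  rw [← hcard]
  refine (Finset.card_le_card ?_).trans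
    (Finset.card_image_le (f := fun x : (Fin d → Fin r) × (Fin r → α) => x.2 ∘ x.1))
  intro g hg
  have hg : (Finset.univ.image g).card = r := by simpa using hg
  let e := Finset.equivFinOfCardEq hg
  refine Finset.mem_image.2 ⟨(fun j => e ⟨g j, by simp⟩, fun i => (e.symm i).1), ?_, ?_⟩
  · simp only [Finset.mem_product, Finset.mem_filter, Finset.mem_univ, true_and, and_true]
    intro i
    obtain ⟨j, -, hj⟩ := Finset.mem_image.1 (e.symm i).2
    refine ⟨j, ?_⟩
    rw [← e.eq_symm_apply]
    exact Subtype.ext hj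
  · funext j
    simp

/-- The `d`-th moment bound `E |N_f(U)| ^ d ≤ M`, with the expectation cleared of denominators. -/
theorem moment_bound {F : Type*} [Field F] [Fintype F] {s d : ℕ} (hd : 1 ≤ d) (hsd : s ≤ d)
    (U : Finset (Fin s → F)) (hU : U.card = s) :
    ∑ f ∈ (PolySet.finite F s d).toFinset, (commonNbhd f U).card ^ d
      ≤ (∑ r ∈ Finset.Icc 1 d, numSurj d r) * (PolySet F s d).ncard := by
  classical
  set P := (PolySet.finite F s d).toFinset with hP
  set q := Fintype.card F with hq
  let Z : (Fin d → Fin s → F) → Finset (MvPolynomial (Fin s ⊕ Fin s) F) :=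
    fun g => P.filter fun f => ∀ j, g j ∈ commonNbhd f U
  have h1 : ∀ f, (commonNbhd f U).card ^ d
      = ∑ g : Fin d → Fin s → F, if ∀ j, g j ∈ commonNbhd f U then 1 else 0 := by
    intro f
    rw [← Finset.card_filter]
    have : (Finset.univ.filter fun g : Fin d → Fin s → F => ∀ j, g j ∈ commonNbhd f U)
        = Fintype.piFinset fun _ => commonNbhd f U := by
      ext g; simp
    rw [this]
    simp
  have h2 : ∑ f ∈ P, (commonNbhd f U).card ^ d = ∑ g, (Z g).card := by
    simp_rw [h1]
    rw [Finset.sum_comm]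
    exact Finset.sum_congr rfl fun g _ => (Finset.card_filter _ _).symm
  have hmaps : ∀ g ∈ (Finset.univ : Finset (Fin d → Fin s → F)),
      (Finset.univ.image g).card ∈ Finset.Icc 1 d := by
    intro g _
    refine Finset.mem_Icc.2 ⟨Finset.card_pos.2 ⟨g ⟨0, hd⟩, by simp⟩, ?_⟩
    simpa using Finset.card_image_le (s := Finset.univ) (f := g)
  rw [h2, ← Finset.sum_fiberwise_of_maps_to hmaps, Finset.sum_mul]
  refine Finset.sum_le_sum fun r hr => ?_
  have hqpos : 0 < q ^ (s * r) := pow_pos Fintype.card_pos _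
  refine Nat.le_of_mul_le_mul_right ?_ hqpos
  rw [Finset.sum_mul]
  have h3 : ∀ g ∈ Finset.univ.filter fun g : Fin d → Fin s → F => (Finset.univ.image g).card = r,
      (Z g).card * q ^ (s * r) ≤ (PolySet F s d).ncard := by
    intro g hg
    have hg : (Finset.univ.image g).card = r := by simpa using hg
    have := card_vanishing_mul_le (d := d) (U := U) (T := Finset.univ.image g) (by omega)
      (by rw [hg]; exact (Finset.mem_Icc.1 hr).2) (Z g) (by
        intro f hf
        obtain ⟨hf1, hf2⟩ := Finset.mem_filter.1 hf
        refine ⟨by simpa [hP] using hf1, ?_⟩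
        intro v hv
        obtain ⟨j, -, rfl⟩ := Finset.mem_image.1 hv
        simpa [commonNbhd] using hf2 j)
    rwa [hU, hg] at this
  refine (Finset.sum_le_card_nsmul _ _ _ h3).trans ?_
  rw [smul_eq_mul]
  have h4 := card_tuples_le (α := Fin s → F) d r
  rw [Fintype.card_fun, Fintype.card_fin, ← pow_mul] at h4
  calc _ ≤ (numSurj d r * q ^ (s * r)) * (PolySet F s d).ncard := Nat.mul_le_mul_right _ h4
    _ = _ := by ring

/-- Markov's inequality applied to the `d`-th moment bound: for any `U` of
size `s` and any real `λ > 0`, at most a fraction `M / λ^d` of the polynomials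
`f ∈ P` have `|N_f(U)| ≥ λ`, where `M = Σ_{r=1}^{d} M_r`. -/
theorem deviation_bound (F : Type*) [Field F] [Fintype F]
    (s d : ℕ) (hs : 1 ≤ s) (hd : 1 ≤ d) (hsd : s ≤ d)
    (hdq : (d : ℝ) ≤ Real.sqrt (Fintype.card F))
    (U : Finset (Fin s → F)) (hU : U.card = s)
    (lam : ℝ) (hlam : 0 < lam) :
    (({f ∈ PolySet F s d | lam ≤ ((commonNbhd f U).card : ℝ)}).ncard : ℝ)
      ≤ (∑ r ∈ Finset.Icc 1 d, numSurj d r) * ((PolySet F s d).ncard : ℝ)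
          / lam ^ d := by
  classical
  have hmom := moment_bound hd hsd U hU
  set P := (PolySet.finite F s d).toFinset with hP
  have hset : {f ∈ PolySet F s d | lam ≤ ((commonNbhd f U).card : ℝ)}
      = ((P.filter fun f => lam ≤ ((commonNbhd f U).card : ℝ) :
          Finset (MvPolynomial (Fin s ⊕ Fin s) F)) : Set _) := by
    ext f; simp [hP]
  rw [hset, Set.ncard_coe_finset, le_div_iff₀ (pow_pos hlam d), ← nsmul_eq_mul]
  calc _ ≤ ∑ f ∈ P.filter fun f => lam ≤ ((commonNbhd f U).card : ℝ),
        ((commonNbhd f U).card : ℝ) ^ d :=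
        Finset.card_nsmul_le_sum _ _ _ fun f hf =>
          pow_le_pow_left₀ hlam.le (Finset.mem_filter.1 hf).2 d
    _ ≤ ∑ f ∈ P, ((commonNbhd f U).card : ℝ) ^ d :=
        Finset.sum_le_sum_of_subset_of_nonneg (Finset.filter_subset _ _)
          fun _ _ _ => by positivity
    _ ≤ _ := by exact_mod_cast hmom
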